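/- (Pointwise domination of the auxiliary maximal function) Let W be a matrix A_2 weight on ℝ^d with characteristic [W]_{A_2}, and define M_W' f(x) = sup_{I ∋ x} (1/|I|)∫_I |(m_I(W^{-1}))^{-1/2} W^{-1/2}(y) f(y)| dy, the supremum over dyadic cubes containing x. Then there exists ε ≈ [W]_{A_2}^{-1} and a constant c (depending only on n, d) such that M_W' f(x) ≤ c (M(|f|^{(2+ε)/(1+ε)})(x))^{(1+ε)/(2+ε)} for a.e. x, where M is the unweighted Hardy–Littlewood dyadic maximal function. Consequently ‖M_W'‖²_{L²→L²} ≲ [W]_{A_2}. -/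

import Mathlib

open MeasureTheory Matrix
open scoped ComplexOrder

/-- The operator norm on `n × n` complex matrices induced by the Euclidean norm. -/
noncomputable def matNorm {n : ℕ} (M : Matrix (Fin n) (Fin n) ℂ) : ℝ :=
  ‖(Matrix.toEuclideanCLM (𝕜 := ℂ) M : EuclideanSpace ℂ (Fin n) →L[ℂ] EuclideanSpace ℂ (Fin n))‖

/-- The Euclidean norm of a vector in `ℂⁿ`. -/
noncomputable def vecNorm {n : ℕ} (v : Fin n → ℂ) : ℝ :=
  ‖(WithLp.equiv 2 (Fin n → ℂ)).symm v‖

/-- A (half-open, axis-parallel) cube in `ℝ^d`. -/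
def IsCube {d : ℕ} (I : Set (Fin d → ℝ)) : Prop :=
  ∃ (a : Fin d → ℝ) (ℓ : ℝ), 0 < ℓ ∧ I = Set.univ.pi fun i => Set.Ico (a i) (a i + ℓ)

/-- The average `(1/|I|) ∫_I g` of a scalar function over a set `I`. -/
noncomputable def avg {d : ℕ} (I : Set (Fin d → ℝ)) (g : (Fin d → ℝ) → ℝ) : ℝ :=
  (volume I).toReal⁻¹ * ∫ x in I, g x

/-- The (entrywise) average of a vector-valued function over a set `I`. -/
noncomputable def vavg {d n : ℕ} (I : Set (Fin d → ℝ)) (f : (Fin d → ℝ) → Fin n → ℂ) :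
    Fin n → ℂ :=
  fun i => (volume I).toReal⁻¹ • (∫ x in I, f x i)

/-- The (entrywise) average of a matrix-valued function over a set `I`. -/
noncomputable def mavg {d n : ℕ} (I : Set (Fin d → ℝ))
    (F : (Fin d → ℝ) → Matrix (Fin n) (Fin n) ℂ) : Matrix (Fin n) (Fin n) ℂ :=
  Matrix.of fun i j => (volume I).toReal⁻¹ • (∫ x in I, F x i j)
open scoped ENNReal

/-- The dyadic cube of generation `k` indexed by `m ∈ ℤ^d`. -/
def dCube (d : ℕ) (I : ℤ × (Fin d → ℤ)) : Set (Fin d → ℝ) :=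
  Set.univ.pi fun i =>
    Set.Ico ((I.2 i : ℝ) * (2 : ℝ) ^ (-I.1)) (((I.2 i : ℝ) + 1) * (2 : ℝ) ^ (-I.1))

/-- The Euclidean norm of a vector of `ℂⁿ`, valued in `ℝ≥0∞`. -/
noncomputable def vecENorm {n : ℕ} (v : Fin n → ℂ) : ℝ≥0∞ := ENNReal.ofReal (vecNorm v)

/-- The auxiliary weighted maximal function
`M_W' f(x) = sup_{I ∋ x} (1/|I|) ∫_I |(m_I(W^{-1}))^{-1/2} W^{-1/2}(y) f(y)| dy`,
the supremum over dyadic cubes; `R I` plays the role of `(m_I(W^{-1}))^{-1/2}` and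
`Winvhalf` that of `W^{-1/2}`. -/
noncomputable def MWaux {d n : ℕ} (R : ℤ × (Fin d → ℤ) → Matrix (Fin n) (Fin n) ℂ)
    (Winvhalf : (Fin d → ℝ) → Matrix (Fin n) (Fin n) ℂ)
    (f : (Fin d → ℝ) → Fin n → ℂ) (x : Fin d → ℝ) : ℝ≥0∞ :=
  ⨆ (I : ℤ × (Fin d → ℤ)) (_ : x ∈ dCube d I),
    (volume (dCube d I))⁻¹ *
      ∫⁻ y in dCube d I, vecENorm ((R I).mulVec ((Winvhalf y).mulVec (f y)))

/-- The unweighted dyadic Hardy–Littlewood maximal function. -/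
noncomputable def dyadicMax {d : ℕ} (g : (Fin d → ℝ) → ℝ≥0∞) (x : Fin d → ℝ) : ℝ≥0∞ :=
  ⨆ (I : ℤ × (Fin d → ℤ)) (_ : x ∈ dCube d I),
    (volume (dCube d I))⁻¹ * ∫⁻ y in dCube d I, g y


/-! ### Dyadic cubes -/

theorem mem_dCube_iff {d : ℕ} (I : ℤ × (Fin d → ℤ)) (x : Fin d → ℝ) :
    x ∈ dCube d I ↔ ∀ i, ⌊x i * (2 : ℝ) ^ I.1⌋ = I.2 i := by
  have h2 : (0 : ℝ) < (2 : ℝ) ^ I.1 := by positivity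
  unfold dCube
  simp only [Set.mem_univ_pi, Set.mem_Ico, Int.floor_eq_iff, _root_.zpow_neg]
  refine forall_congr' fun i => ?_
  rw [← div_eq_mul_inv, ← div_eq_mul_inv, div_le_iff₀ h2, lt_div_iff₀ h2]

/-- The dyadic cube of generation `k` containing `x`. -/
noncomputable def idx {d : ℕ} (k : ℤ) (x : Fin d → ℝ) : ℤ × (Fin d → ℤ) :=
  (k, fun i => ⌊x i * (2 : ℝ) ^ k⌋)

theorem mem_idx {d : ℕ} (k : ℤ) (x : Fin d → ℝ) : x ∈ dCube d (idx k x) := by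
  rw [mem_dCube_iff]; intro i; rfl

theorem eq_idx {d : ℕ} {I : ℤ × (Fin d → ℤ)} {x : Fin d → ℝ} (h : x ∈ dCube d I) :
    I = idx I.1 x := by
  rw [mem_dCube_iff] at h
  exact Prod.ext rfl (funext fun i => (h i).symm)

theorem dCube_subset {d : ℕ} {J J' : ℤ × (Fin d → ℤ)} {x : Fin d → ℝ} (h : x ∈ dCube d J)
    (h' : x ∈ dCube d J') (hk : J.1 ≤ J'.1) : dCube d J' ⊆ dCube d J := by
  intro y hy
  rw [mem_dCube_iff] at *
  intro i
  rw [← h i]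
  obtain ⟨j, hj⟩ := Int.eq_ofNat_of_zero_le (sub_nonneg.2 hk)
  have key : ∀ t : ℝ, t * (2 : ℝ) ^ J.1 = (t * (2 : ℝ) ^ J'.1) / ((2 ^ j : ℕ) : ℝ) := by
    intro t
    have : J'.1 = J.1 + j := by omega
    rw [this, zpow_add₀ (by norm_num)]
    push_cast
    rw [zpow_natCast]
    field_simp
  rw [key, key, Int.floor_div_natCast, Int.floor_div_natCast, hy i, h' i]

theorem measurableSet_dCube {d : ℕ} (I : ℤ × (Fin d → ℤ)) : MeasurableSet (dCube d I) :=
  MeasurableSet.univ_pi fun _ => measurableSet_Ico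

theorem volume_dCube {d : ℕ} (I : ℤ × (Fin d → ℤ)) :
    volume (dCube d I) = ENNReal.ofReal ((2 : ℝ) ^ (-I.1)) ^ d := by
  unfold dCube
  rw [Real.volume_pi_Ico]
  simp [add_mul]

theorem volume_dCube_ne_zero {d : ℕ} (I : ℤ × (Fin d → ℤ)) : volume (dCube d I) ≠ 0 := by
  rw [volume_dCube]
  refine pow_ne_zero _ ?_
  have : (0 : ℝ) < (2 : ℝ) ^ (-I.1) := by positivity
  simpa using this

theorem volume_dCube_ne_top {d : ℕ} (I : ℤ × (Fin d → ℤ)) : volume (dCube d I) ≠ ⊤ := by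
  rw [volume_dCube]
  exact ENNReal.pow_ne_top ENNReal.ofReal_ne_top

theorem volume_parent {d : ℕ} (k : ℤ) (x : Fin d → ℝ) :
    volume (dCube d (idx (k - 1) x)) = 2 ^ d * volume (dCube d (idx k x)) := by
  rw [volume_dCube, volume_dCube, ← mul_pow]
  congr 1
  have : (2 : ℝ≥0∞) = ENNReal.ofReal 2 := by simp
  rw [this, ← ENNReal.ofReal_mul (by norm_num)]
  congr 1
  simp only [idx]
  rw [neg_sub, sub_eq_add_neg, zpow_add₀ (by norm_num)]
  simp

/-- The maximal cubes of a family. -/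
def maxFam {d : ℕ} (T : Set (ℤ × (Fin d → ℤ))) : Set (ℤ × (Fin d → ℤ)) :=
  {J | J ∈ T ∧ ∀ J' ∈ T, J'.1 < J.1 → ¬ dCube d J ⊆ dCube d J'}

theorem maxFam_disjoint {d : ℕ} (T : Set (ℤ × (Fin d → ℤ))) :
    (maxFam T).PairwiseDisjoint (dCube d) := by
  intro J hJ J' hJ' hne
  rw [Function.onFun, Set.disjoint_left]
  intro x hx hx'
  rcases lt_trichotomy J.1 J'.1 with h | h | h
  · exact hJ'.2 J hJ.1 h (dCube_subset hx hx' h.le)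
  · apply hne
    rw [eq_idx hx, eq_idx hx', h]
  · exact hJ.2 J' hJ'.1 h (dCube_subset hx' hx h.le)

theorem maxFam_cover {d : ℕ} (T : Set (ℤ × (Fin d → ℤ))) (k₀ : ℤ) (hT : ∀ J ∈ T, k₀ ≤ J.1) :
    (⋃ J ∈ maxFam T, dCube d J) = ⋃ J ∈ T, dCube d J := by
  apply Set.Subset.antisymm
  · exact Set.biUnion_subset_biUnion_left fun J hJ => hJ.1
  · intro x hx
    simp only [Set.mem_iUnion] at hx ⊢
    obtain ⟨J, hJ, hx⟩ := hx
    have hex : ∃ k : ℤ, idx k x ∈ T := ⟨J.1, by rw [← eq_idx hx]; exact hJ⟩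
    obtain ⟨k, hk, hmin⟩ := Int.exists_least_of_bdd (P := fun k => idx k x ∈ T)
      ⟨k₀, fun z hz => hT _ hz⟩ hex
    refine ⟨idx k x, ⟨hk, ?_⟩, mem_idx k x⟩
    intro J' hJ' hlt hsub
    have hx' : x ∈ dCube d J' := hsub (mem_idx k x)
    have := hmin J'.1 (by rw [← eq_idx hx']; exact hJ')
    simp only [idx] at hlt
    omega

theorem lintegral_maxFam {d : ℕ} (T : Set (ℤ × (Fin d → ℤ))) (h : (Fin d → ℝ) → ℝ≥0∞) :
    ∫⁻ x in ⋃ J ∈ maxFam T, dCube d J, h x = ∑' J : maxFam T, ∫⁻ x in dCube d J, h x :=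
  lintegral_biUnion (Set.to_countable _) (fun _ _ => measurableSet_dCube _) (maxFam_disjoint T) h

theorem volume_maxFam {d : ℕ} (T : Set (ℤ × (Fin d → ℤ))) (A : Set (Fin d → ℝ))
    (hA : MeasurableSet A) :
    volume (A ∩ ⋃ J ∈ maxFam T, dCube d J) = ∑' J : maxFam T, volume (A ∩ dCube d J) := by
  rw [Set.inter_iUnion₂]
  exact measure_biUnion (Set.to_countable _)
    ((maxFam_disjoint T).mono_on fun J _ => Set.inter_subset_right)
    (fun _ _ => hA.inter (measurableSet_dCube _))

/-! ### The dyadic maximal function -/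

theorem lt_avg_iff {d : ℕ} (I : ℤ × (Fin d → ℤ)) (t s : ℝ≥0∞) :
    t < (volume (dCube d I))⁻¹ * s ↔ t * volume (dCube d I) < s := by
  rw [mul_comm, ← div_eq_mul_inv,
    ENNReal.lt_div_iff_mul_lt (Or.inl (volume_dCube_ne_zero I)) (Or.inl (volume_dCube_ne_top I))]

theorem levelSet {d : ℕ} (g : (Fin d → ℝ) → ℝ≥0∞) (t : ℝ≥0∞) :
    {x | t < dyadicMax g x} =
      ⋃ J ∈ {J : ℤ × (Fin d → ℤ) | t * volume (dCube d J) < ∫⁻ y in dCube d J, g y},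
        dCube d J := by
  ext x
  simp only [dyadicMax, Set.mem_ofPred_eq, lt_iSup_iff, Set.mem_iUnion, lt_avg_iff]
  constructor
  · rintro ⟨i, a, b⟩; exact ⟨i, b, a⟩
  · rintro ⟨i, a, b⟩; exact ⟨i, b, a⟩

theorem measurable_dyadicMax {d : ℕ} (g : (Fin d → ℝ) → ℝ≥0∞) : Measurable (dyadicMax g) := by
  refine measurable_of_Ioi fun t => ?_
  have : dyadicMax g ⁻¹' Set.Ioi t = {x | t < dyadicMax g x} := rfl
  rw [this, levelSet]
  exact MeasurableSet.biUnion (Set.to_countable _) fun _ _ => measurableSet_dCube _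

theorem weak_type {d : ℕ} (g : (Fin d → ℝ) → ℝ≥0∞) (t : ℝ≥0∞) :
    t * volume {x | t < dyadicMax g x} ≤ ∫⁻ x, g x := by
  rw [levelSet]
  set T := {J : ℤ × (Fin d → ℤ) | t * volume (dCube d J) < ∫⁻ y in dCube d J, g y} with hT
  let Tk : ℕ → Set (ℤ × (Fin d → ℤ)) := fun k => {J | J ∈ T ∧ -(k : ℤ) ≤ J.1}
  have hU : (⋃ J ∈ T, dCube d J) = ⋃ k, ⋃ J ∈ Tk k, dCube d J := by
    ext x
    simp only [Set.mem_iUnion, Tk, Set.mem_ofPred_eq]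
    constructor
    · rintro ⟨J, hJ, hx⟩
      exact ⟨J.1.natAbs, J, ⟨hJ, by omega⟩, hx⟩
    · rintro ⟨_, J, hJ, hx⟩
      exact ⟨J, hJ.1, hx⟩
  have hmono : Monotone fun k => ⋃ J ∈ Tk k, dCube d J := by
    intro a b hab
    refine Set.biUnion_subset_biUnion_left fun J hJ => ⟨hJ.1, ?_⟩
    have := hJ.2
    omega
  rw [hU, hmono.directed_le.measure_iUnion, ENNReal.mul_iSup]
  refine iSup_le fun k => ?_
  rw [← maxFam_cover (Tk k) (-(k : ℤ)) fun J hJ => hJ.2]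
  have h1 := volume_maxFam (Tk k) Set.univ MeasurableSet.univ
  simp only [Set.univ_inter] at h1
  rw [h1, ← ENNReal.tsum_mul_left]
  calc _ ≤ ∑' J : maxFam (Tk k), ∫⁻ x in dCube d J, g x :=
        ENNReal.tsum_le_tsum fun J => J.2.1.1.le
    _ = _ := (lintegral_maxFam _ _).symm
    _ ≤ _ := setLIntegral_le_lintegral _ _

theorem weak_type' {d : ℕ} (g : (Fin d → ℝ) → ℝ≥0∞) (hg : Measurable g) (t : ℝ≥0∞) :
    t * volume {x | 2 * t < dyadicMax g x} ≤ ∫⁻ x in {x | t < g x}, g x := by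
  have hm : MeasurableSet {x | t < g x} := hg measurableSet_Ioi
  rw [← lintegral_indicator hm]
  refine le_trans ?_ (weak_type _ t)
  gcongr t * volume ?_
  intro x hx
  have hle : dyadicMax g x ≤ dyadicMax ({x | t < g x}.indicator g) x + t := by
    unfold dyadicMax
    refine iSup₂_le fun I hI => ?_
    calc (volume (dCube d I))⁻¹ * ∫⁻ y in dCube d I, g y
        ≤ (volume (dCube d I))⁻¹ * ∫⁻ y in dCube d I, ({x | t < g x}.indicator g y + t) := by
          gcongr with y
          by_cases h : t < g y
          · simp [Set.indicator, h]
          · have h' : g y ≤ t := not_lt.1 h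
            exact h'.trans le_add_self
      _ = (volume (dCube d I))⁻¹ * (∫⁻ y in dCube d I, {x | t < g x}.indicator g y) + t := by
          rw [lintegral_add_right _ measurable_const, mul_add, setLIntegral_const,
            mul_comm t, ← mul_assoc, ENNReal.inv_mul_cancel (volume_dCube_ne_zero I)
            (volume_dCube_ne_top I), one_mul]
      _ ≤ _ := by
          gcongr
          exact le_iSup₂ (f := fun (I : ℤ × (Fin d → ℤ)) (_ : x ∈ dCube d I) =>
            (volume (dCube d I))⁻¹ * ∫⁻ y in dCube d I, {x | t < g x}.indicator g y) I hI
  have h2 : t + t < dyadicMax ({x | t < g x}.indicator g) x + t := by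
    rw [← two_mul]; exact lt_of_lt_of_le hx hle
  exact lt_of_add_lt_add_right h2

theorem strong_type_trunc {d : ℕ} (g : (Fin d → ℝ) → ℝ) (hg : Measurable g) (hg0 : ∀ x, 0 ≤ g x)
    (r : ℝ) (hr : 1 < r) (hr2 : r ≤ 2) (N : ℕ) :
    ∫⁻ x, (min (dyadicMax (fun y => ENNReal.ofReal (g y)) x) N) ^ r
      ≤ ENNReal.ofReal (8 / (r - 1)) * ∫⁻ x, ENNReal.ofReal (g x) ^ r := by
  set G : (Fin d → ℝ) → ℝ≥0∞ := fun y => ENNReal.ofReal (g y) with hG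
  have hGm : Measurable G := hg.ennreal_ofReal
  have hMm := measurable_dyadicMax G
  set m : (Fin d → ℝ) → ℝ := fun x => (min (dyadicMax G x) N).toReal with hm
  have hfin : ∀ x, min (dyadicMax G x) (N : ℝ≥0∞) ≠ ⊤ := fun x =>
    ne_top_of_le_ne_top (ENNReal.natCast_ne_top N) (min_le_right _ _)
  have hmm : Measurable m := (hMm.min measurable_const).ennreal_toReal
  set ν := (volume : Measure (Fin d → ℝ)).withDensity G with hν
  have h1 : ∫⁻ x, (min (dyadicMax G x) N) ^ r = ∫⁻ x, ENNReal.ofReal (m x ^ r) := by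
    refine lintegral_congr fun x => ?_
    rw [← ENNReal.ofReal_rpow_of_nonneg ENNReal.toReal_nonneg (by linarith),
      ENNReal.ofReal_toReal (hfin x)]
  rw [h1, lintegral_rpow_eq_lintegral_meas_lt_mul volume
    (Filter.Eventually.of_forall fun x => ENNReal.toReal_nonneg) hmm.aemeasurable (by linarith)]
  have h2 : ∀ t ∈ Set.Ioi (0 : ℝ), volume {a | t < m a} * ENNReal.ofReal (t ^ (r - 1))
      ≤ 2 * (ν {a | t < 2 * g a} * ENNReal.ofReal (t ^ (r - 1 - 1))) := by
    intro t ht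
    have ht : 0 < t := ht
    have e1 : volume {a | t < m a} ≤ volume {a | 2 * ENNReal.ofReal (t / 2) < dyadicMax G a} := by
      refine measure_mono fun a (ha : t < m a) => ?_
      have : 2 * ENNReal.ofReal (t / 2) = ENNReal.ofReal t := by
        have h2 : (2 : ℝ≥0∞) = ENNReal.ofReal 2 := by simp
        rw [h2, ← ENNReal.ofReal_mul (by norm_num)]
        congr 1; ring
      show 2 * ENNReal.ofReal (t / 2) < dyadicMax G a
      rw [this]
      refine lt_of_lt_of_le ?_ (min_le_left _ (N : ℝ≥0∞))
      exact (ENNReal.ofReal_lt_iff_lt_toReal ht.le (hfin a)).2 ha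
    have e2 := weak_type' G hGm (ENNReal.ofReal (t / 2))
    have e3 : ∫⁻ x in {x | ENNReal.ofReal (t / 2) < G x}, G x = ν {a | t < 2 * g a} := by
      have hs : {x | ENNReal.ofReal (t / 2) < G x} = {a | t < 2 * g a} := by
        ext a
        simp only [Set.mem_ofPred_eq, hG]
        rw [ENNReal.ofReal_lt_ofReal_iff_of_nonneg (by positivity)]
        constructor <;> intro h <;> linarith
      rw [hs, hν, withDensity_apply _ (measurableSet_lt measurable_const (hg.const_mul 2))]
    have e4 : ENNReal.ofReal (t ^ (r - 1)) =
        ENNReal.ofReal (t / 2) * (2 * ENNReal.ofReal (t ^ (r - 1 - 1))) := by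
      have h2 : (2 : ℝ≥0∞) = ENNReal.ofReal 2 := by simp
      rw [h2, ← ENNReal.ofReal_mul (by norm_num), ← ENNReal.ofReal_mul (by positivity)]
      congr 1
      rw [Real.rpow_sub_one ht.ne' (r - 1)]
      field_simp
    rw [e4]
    calc _ ≤ volume {a | 2 * ENNReal.ofReal (t / 2) < dyadicMax G a} *
          (ENNReal.ofReal (t / 2) * (2 * ENNReal.ofReal (t ^ (r - 1 - 1)))) := by gcongr
      _ = (ENNReal.ofReal (t / 2) * volume {a | 2 * ENNReal.ofReal (t / 2) < dyadicMax G a}) *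
          (2 * ENNReal.ofReal (t ^ (r - 1 - 1))) := by ring
      _ ≤ ν {a | t < 2 * g a} * (2 * ENNReal.ofReal (t ^ (r - 1 - 1))) := by
          rw [← e3]; gcongr
      _ = _ := by ring
  have h3 := lintegral_rpow_eq_lintegral_meas_lt_mul ν (f := fun a => 2 * g a)
    (Filter.Eventually.of_forall fun x => mul_nonneg zero_le_two (hg0 x))
    (hg.const_mul 2).aemeasurable (p := r - 1) (by linarith)
  have h4 : ∫⁻ a, ENNReal.ofReal ((2 * g a) ^ (r - 1)) ∂ν ≤ 2 * ∫⁻ x, G x ^ r := by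
    rw [hν, lintegral_withDensity_eq_lintegral_mul _ hGm (by fun_prop),
      ← lintegral_const_mul _ (by fun_prop)]
    refine lintegral_mono fun x => ?_
    simp only [Pi.mul_apply, hG]
    have h2 : (2 : ℝ≥0∞) = ENNReal.ofReal 2 := by simp
    rw [ENNReal.ofReal_rpow_of_nonneg (hg0 x) (by linarith), h2,
      ← ENNReal.ofReal_mul (hg0 x), ← ENNReal.ofReal_mul zero_le_two]
    refine ENNReal.ofReal_le_ofReal ?_
    rw [Real.mul_rpow (by norm_num) (hg0 x)]
    have h5 : (2 : ℝ) ^ (r - 1) ≤ 2 := by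
      calc (2 : ℝ) ^ (r - 1) ≤ (2 : ℝ) ^ (1 : ℝ) :=
            Real.rpow_le_rpow_of_exponent_le (by norm_num) (by linarith)
        _ = 2 := by simp
    have h6 : g x * g x ^ (r - 1) = g x ^ r := by
      rcases (hg0 x).eq_or_lt with h | h
      · rw [← h, Real.zero_rpow (by linarith : r ≠ 0)]; simp
      · rw [Real.rpow_sub_one h.ne']; field_simp
    have h7 : 0 ≤ g x ^ r := Real.rpow_nonneg (hg0 x) _
    calc g x * (2 ^ (r - 1) * g x ^ (r - 1)) = 2 ^ (r - 1) * (g x * g x ^ (r - 1)) := by ring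
      _ ≤ _ := by rw [h6]; gcongr
  have hr1 : 0 < r - 1 := by linarith
  have h5 : ∫⁻ (t : ℝ) in Set.Ioi 0, ν {a | t < 2 * g a} * ENNReal.ofReal (t ^ (r - 1 - 1))
      ≤ ENNReal.ofReal (2 / (r - 1)) * ∫⁻ x, G x ^ r := by
    rw [h3] at h4
    have h2 : (2 : ℝ≥0∞) = ENNReal.ofReal 2 := by simp
    have hne : ENNReal.ofReal (r - 1) ≠ 0 := by simpa using hr1
    rw [ENNReal.ofReal_div_of_pos hr1, ← h2, ENNReal.div_eq_inv_mul, mul_assoc]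
    rw [← ENNReal.inv_mul_le_iff (by simp) (by simpa using hr1), inv_inv]
    exact h4
  calc _ ≤ ENNReal.ofReal r * ∫⁻ (t : ℝ) in Set.Ioi 0,
        2 * (ν {a | t < 2 * g a} * ENNReal.ofReal (t ^ (r - 1 - 1))) := by
        gcongr 1
        exact setLIntegral_mono' measurableSet_Ioi h2
    _ = ENNReal.ofReal r * (2 * ∫⁻ (t : ℝ) in Set.Ioi 0,
        (ν {a | t < 2 * g a} * ENNReal.ofReal (t ^ (r - 1 - 1)))) := by
        rw [lintegral_const_mul' _ _ (by simp)]
    _ ≤ ENNReal.ofReal 2 * (2 * (ENNReal.ofReal (2 / (r - 1)) * ∫⁻ x, G x ^ r)) := by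
        gcongr
    _ = _ := by
        have h2 : (2 : ℝ≥0∞) = ENNReal.ofReal 2 := by simp
        rw [h2, ← mul_assoc, ← mul_assoc, ← ENNReal.ofReal_mul (by norm_num),
          ← ENNReal.ofReal_mul (by norm_num)]
        congr 2
        ring

theorem strong_type {d : ℕ} (g : (Fin d → ℝ) → ℝ) (hg : Measurable g) (hg0 : ∀ x, 0 ≤ g x)
    (r : ℝ) (hr : 1 < r) (hr2 : r ≤ 2) :
    ∫⁻ x, (dyadicMax (fun y => ENNReal.ofReal (g y)) x) ^ r
      ≤ ENNReal.ofReal (8 / (r - 1)) * ∫⁻ x, ENNReal.ofReal (g x) ^ r := by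
  have hMm := measurable_dyadicMax fun y => ENNReal.ofReal (g y)
  have key : ∀ x, (dyadicMax (fun y => ENNReal.ofReal (g y)) x) ^ r
      = ⨆ N : ℕ, (min (dyadicMax (fun y => ENNReal.ofReal (g y)) x) N) ^ r := by
    intro x
    apply le_antisymm
    · have ht : Filter.Tendsto
          (fun N : ℕ => (min (dyadicMax (fun y => ENNReal.ofReal (g y)) x) N) ^ r)
          Filter.atTop (nhds ((min (dyadicMax (fun y => ENNReal.ofReal (g y)) x) ⊤) ^ r)) :=
        (ENNReal.continuous_rpow_const.tendsto _).comp
          (tendsto_const_nhds.min ENNReal.tendsto_nat_nhds_top)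
      rw [min_top_right] at ht
      exact le_of_tendsto' ht fun N => le_iSup (fun N : ℕ =>
        (min (dyadicMax (fun y => ENNReal.ofReal (g y)) x) N) ^ r) N
    · refine iSup_le fun N => ENNReal.rpow_le_rpow (min_le_left _ _) (by linarith)
  simp_rw [key]
  rw [lintegral_iSup (fun N => (hMm.min measurable_const).pow_const r)]
  · exact iSup_le fun N => strong_type_trunc g hg hg0 r hr hr2 N
  · intro a b hab x
    exact ENNReal.rpow_le_rpow (min_le_min_left _ (by exact_mod_cast hab)) (by linarith)

/-! ### Scalar reverse Hölder inequality -/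

theorem dCube_ae_eq_closedBall {d : ℕ} (I : ℤ × (Fin d → ℤ)) :
    dCube d I =ᵐ[volume] Metric.closedBall
      (fun i => ((I.2 i : ℝ) + 1 / 2) * (2 : ℝ) ^ (-I.1)) ((2 : ℝ) ^ (-I.1) / 2) := by
  have h2 : (0 : ℝ) < (2 : ℝ) ^ (-I.1) := by positivity
  have hb : Metric.closedBall
      (fun i => ((I.2 i : ℝ) + 1 / 2) * (2 : ℝ) ^ (-I.1)) ((2 : ℝ) ^ (-I.1) / 2) =
      Set.Icc (fun i => (I.2 i : ℝ) * (2 : ℝ) ^ (-I.1))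
        (fun i => ((I.2 i : ℝ) + 1) * (2 : ℝ) ^ (-I.1)) := by
    rw [closedBall_pi _ (by positivity), ← Set.pi_univ_Icc]
    congr 1
    funext i
    rw [Real.closedBall_eq_Icc]
    congr 1 <;> ring
  rw [hb]
  exact Measure.univ_pi_Ico_ae_eq_Icc

theorem lebesgue_cubes {d : ℕ} (w : (Fin d → ℝ) → ℝ) (hw : Measurable w) (hw0 : ∀ x, 0 ≤ w x)
    (I : ℤ × (Fin d → ℤ)) (hI : ∫⁻ y in dCube d I, ENNReal.ofReal (w y) ≠ ⊤) (t : ℝ)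
    (ht : 0 ≤ t) :
    ∀ᵐ x, x ∈ dCube d I → t < w x → ∃ J : ℤ × (Fin d → ℤ), I.1 ≤ J.1 ∧ dCube d J ⊆ dCube d I ∧
      ENNReal.ofReal t * volume (dCube d J) < ∫⁻ y in dCube d J, ENNReal.ofReal (w y) ∧
      x ∈ dCube d J := by
  have hint : IntegrableOn w (dCube d I) volume := by
    refine ⟨hw.aestronglyMeasurable, ?_⟩
    rw [hasFiniteIntegral_iff_ofReal (Filter.Eventually.of_forall hw0)]
    exact lt_top_iff_ne_top.2 hI
  have hint' : Integrable ((dCube d I).indicator w) volume :=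
    (integrable_indicator_iff (measurableSet_dCube I)).2 hint
  have hleb := IsUnifLocDoublingMeasure.ae_tendsto_average (volume : Measure (Fin d → ℝ))
    hint'.locallyIntegrable 1
  filter_upwards [hleb] with x hx hxI hxt
  have hlim := hx (l := Filter.atTop) (fun j : ℕ => fun i =>
      (((idx (I.1 + j) x).2 i : ℝ) + 1 / 2) * (2 : ℝ) ^ (-(I.1 + j)))
    (fun j : ℕ => (2 : ℝ) ^ (-(I.1 + j)) / 2) ?_ ?_
  · rw [Set.indicator_of_mem hxI] at hlim
    obtain ⟨j, hj⟩ := (hlim.eventually (lt_mem_nhds hxt)).exists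
    have hsub : dCube d (idx (I.1 + j) x) ⊆ dCube d I :=
      dCube_subset hxI (mem_idx _ x) (by simp [idx])
    refine ⟨idx (I.1 + j) x, by simp [idx], hsub, ?_, mem_idx _ x⟩
    have hae := dCube_ae_eq_closedBall (idx (I.1 + j) x)
    have he : ⨍ y in Metric.closedBall (fun i =>
        (((idx (I.1 + j) x).2 i : ℝ) + 1 / 2) * (2 : ℝ) ^ (-(I.1 + j)))
        ((2 : ℝ) ^ (-(I.1 + j)) / 2), (dCube d I).indicator w y
        = ⨍ y in dCube d (idx (I.1 + j) x), (dCube d I).indicator w y := by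
      rw [Measure.restrict_congr_set hae]; rfl
    rw [he, setAverage_eq, smul_eq_mul] at hj
    have he2 : ∫ y in dCube d (idx (I.1 + j) x), (dCube d I).indicator w y
        = ∫ y in dCube d (idx (I.1 + j) x), w y :=
      setIntegral_congr_fun (measurableSet_dCube _) fun y hy => Set.indicator_of_mem (hsub hy) w
    rw [he2] at hj
    have hpos : 0 < volume.real (dCube d (idx (I.1 + j) x)) :=
      ENNReal.toReal_pos (volume_dCube_ne_zero _) (volume_dCube_ne_top _)
    rw [← ofReal_integral_eq_lintegral_ofReal (hint.mono_set hsub)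
      (Filter.Eventually.of_forall hw0),
      ← ENNReal.ofReal_toReal (volume_dCube_ne_top (idx (I.1 + j) x)), ← ENNReal.ofReal_mul ht]
    have hlt : t * volume.real (dCube d (idx (I.1 + j) x)) <
        ∫ y in dCube d (idx (I.1 + j) x), w y := by
      rwa [lt_inv_mul_iff₀ hpos, mul_comm] at hj
    exact (ENNReal.ofReal_lt_ofReal_iff_of_nonneg (by positivity)).2 hlt
  · rw [tendsto_nhdsWithin_iff]
    refine ⟨?_, Filter.Eventually.of_forall fun j => ?_⟩
    · have : ∀ j : ℕ, (2 : ℝ) ^ (-(I.1 + j)) / 2 = (2 : ℝ) ^ (-I.1) / 2 * (1 / 2 : ℝ) ^ j := by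
        intro j
        rw [neg_add, zpow_add₀ (by norm_num), _root_.zpow_neg _ (j : ℤ), zpow_natCast]
        simp
        ring
      simp_rw [this]
      have h0 := (tendsto_pow_atTop_nhds_zero_of_lt_one (r := (1 / 2 : ℝ)) (by norm_num)
        (by norm_num)).const_mul ((2 : ℝ) ^ (-I.1) / 2)
      simpa using h0
    · show (0 : ℝ) < _
      positivity
  · refine Filter.Eventually.of_forall fun j => ?_
    have hm := mem_idx (I.1 + j) x
    unfold dCube at hm
    simp only [Set.mem_univ_pi, Set.mem_Ico] at hm
    rw [mem_closedBall_iff_norm, pi_norm_le_iff_of_nonneg (by positivity)]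
    intro i
    have := hm i
    rw [Real.norm_eq_abs, abs_le]
    simp only [idx, Pi.sub_apply] at this ⊢
    constructor <;> nlinarith

theorem cz_level {d : ℕ} (w : (Fin d → ℝ) → ℝ) (hw : Measurable w) (hw0 : ∀ x, 0 ≤ w x)
    (I : ℤ × (Fin d → ℤ))
    (hI : ∫⁻ y in dCube d I, ENNReal.ofReal (w y) = volume (dCube d I)) (B : ℝ)
    (hmed : ∀ J : ℤ × (Fin d → ℤ), volume (dCube d J) ≤ 2 * volume
      ({y | ∫⁻ z in dCube d J, ENNReal.ofReal (w z) ≤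
        ENNReal.ofReal (B * w y) * volume (dCube d J)} ∩ dCube d J))
    (t : ℝ) (ht : 1 ≤ t) :
    ∫⁻ y in {y | t < w y} ∩ dCube d I, ENNReal.ofReal (w y) ≤
      2 ^ (d + 1) * ENNReal.ofReal t * volume ({y | t < B * w y} ∩ dCube d I) := by
  set T : Set (ℤ × (Fin d → ℤ)) := {J | I.1 ≤ J.1 ∧ dCube d J ⊆ dCube d I ∧
    ENNReal.ofReal t * volume (dCube d J) < ∫⁻ y in dCube d J, ENNReal.ofReal (w y)} with hT
  have hms : MeasurableSet {y | t < B * w y} := measurableSet_lt measurable_const (hw.const_mul B)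
  have h1 : ∫⁻ y in {y | t < w y} ∩ dCube d I, ENNReal.ofReal (w y) ≤
      ∫⁻ y in ⋃ J ∈ maxFam T, dCube d J, ENNReal.ofReal (w y) := by
    refine lintegral_mono_set' ?_
    rw [maxFam_cover T I.1 fun J hJ => hJ.1]
    filter_upwards [lebesgue_cubes w hw hw0 I (by rw [hI]; exact volume_dCube_ne_top I) t
      (by linarith)] with x hx hxm
    obtain ⟨J, a, b, c, e⟩ := hx hxm.2 hxm.1
    exact Set.mem_biUnion (show J ∈ T from ⟨a, b, c⟩) e
  have h2 : ∀ J ∈ maxFam T, ∫⁻ y in dCube d J, ENNReal.ofReal (w y) ≤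
      2 ^ (d + 1) * ENNReal.ofReal t * volume ({y | t < B * w y} ∩ dCube d J) := by
    intro J hJ
    obtain ⟨x, hx⟩ : (dCube d J).Nonempty := nonempty_of_measure_ne_zero (volume_dCube_ne_zero J)
    have hxI : x ∈ dCube d I := hJ.1.2.1 hx
    have hne : J.1 ≠ I.1 := by
      intro h
      have hJI : J = I := by rw [eq_idx hx, eq_idx hxI, h]
      have h3 := hJ.1.2.2
      rw [hJI, hI] at h3
      refine absurd h3 (not_lt.2 ?_)
      calc volume (dCube d I) = 1 * volume (dCube d I) := (one_mul _).symm
        _ ≤ _ := by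
          gcongr
          simpa using ht
    have hge : I.1 ≤ J.1 := hJ.1.1
    have hP1 : I.1 ≤ (idx (J.1 - 1) x).1 := by simp only [idx]; omega
    have hP2 : dCube d (idx (J.1 - 1) x) ⊆ dCube d I := dCube_subset hxI (mem_idx _ x) hP1
    have hP3 : dCube d J ⊆ dCube d (idx (J.1 - 1) x) :=
      dCube_subset (mem_idx _ x) hx (by simp [idx])
    have hP : idx (J.1 - 1) x ∉ T := fun h => hJ.2 _ h (by simp [idx]) hP3
    have hP4 : ∫⁻ y in dCube d (idx (J.1 - 1) x), ENNReal.ofReal (w y) ≤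
        ENNReal.ofReal t * volume (dCube d (idx (J.1 - 1) x)) := by
      by_contra hcon
      exact hP ⟨hP1, hP2, not_le.1 hcon⟩
    rw [volume_parent, ← eq_idx hx] at hP4
    calc ∫⁻ y in dCube d J, ENNReal.ofReal (w y)
        ≤ ∫⁻ y in dCube d (idx (J.1 - 1) x), ENNReal.ofReal (w y) := lintegral_mono_set hP3
      _ ≤ _ := hP4
      _ ≤ ENNReal.ofReal t * (2 ^ d * (2 * volume ({y | t < B * w y} ∩ dCube d J))) := by
          gcongr
          refine (hmed J).trans ?_
          gcongr 2 * volume (?_ ∩ dCube d J)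
          intro y hy
          have h5 : ENNReal.ofReal t * volume (dCube d J) <
            ENNReal.ofReal (B * w y) * volume (dCube d J) := hJ.1.2.2.trans_le hy
          have h6 := lt_of_mul_lt_mul_right' h5
          exact (ENNReal.ofReal_lt_ofReal_iff_of_nonneg (by linarith)).1 h6
      _ = _ := by rw [pow_succ]; ring
  refine h1.trans ?_
  rw [lintegral_maxFam]
  calc _ ≤ ∑' J : maxFam T,
        2 ^ (d + 1) * ENNReal.ofReal t * volume ({y | t < B * w y} ∩ dCube d J) :=
        ENNReal.tsum_le_tsum fun J => h2 J J.2
    _ = 2 ^ (d + 1) * ENNReal.ofReal t *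
        volume ({y | t < B * w y} ∩ ⋃ J ∈ maxFam T, dCube d J) := by
        rw [ENNReal.tsum_mul_left, volume_maxFam _ _ hms]
    _ ≤ _ := by
        gcongr
        exact Set.iUnion₂_subset fun J hJ => hJ.1.2.1

theorem rh_const {d : ℕ} (A : ℝ) (hA : 1 ≤ A) (δ : ℝ) (hδ : δ = 1 / (2 ^ (d + 5) * A)) :
    δ * 2 ^ (d + 1) * (2 * A) ^ (1 + δ) ≤ 1 / 2 := by
  have hδ0 : 0 < δ := by rw [hδ]; positivity
  have h1 : (2 * A) ^ δ ≤ 2 := by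
    have h2 : 2 * A ≤ (2 : ℝ) ^ (2 * A) := by
      have := one_add_mul_self_le_rpow_one_add (s := 1) (by norm_num) (p := 2 * A) (by linarith)
      norm_num at this
      linarith
    calc (2 * A) ^ δ ≤ ((2 : ℝ) ^ (2 * A)) ^ δ := by gcongr
      _ = (2 : ℝ) ^ (2 * A * δ) := by rw [← Real.rpow_mul (by norm_num)]
      _ ≤ (2 : ℝ) ^ (1 : ℝ) := by
          apply Real.rpow_le_rpow_of_exponent_le (by norm_num)
          rw [hδ]
          have : (1 : ℝ) ≤ 2 ^ d := one_le_pow₀ (by norm_num)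
          rw [mul_one_div, div_le_one (by positivity), pow_add]
          nlinarith
      _ = 2 := by simp
  rw [Real.rpow_add (by positivity), Real.rpow_one]
  calc δ * 2 ^ (d + 1) * (2 * A * (2 * A) ^ δ) ≤ δ * 2 ^ (d + 1) * (2 * A * 2) := by gcongr
    _ = 1 / 4 := by
        rw [hδ, pow_add, pow_add]
        field_simp
        norm_num
    _ ≤ _ := by norm_num

theorem reverse_holder_trunc {d : ℕ} (w : (Fin d → ℝ) → ℝ) (hw : Measurable w)
    (hw0 : ∀ x, 0 ≤ w x) (I : ℤ × (Fin d → ℤ))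
    (hI : ∫⁻ y in dCube d I, ENNReal.ofReal (w y) = volume (dCube d I)) (A : ℝ) (hA : 1 ≤ A)
    (hmed : ∀ J : ℤ × (Fin d → ℤ), volume (dCube d J) ≤ 2 * volume
      ({y | ∫⁻ z in dCube d J, ENNReal.ofReal (w z) ≤
        ENNReal.ofReal (2 * A * w y) * volume (dCube d J)} ∩ dCube d J))
    (δ : ℝ) (hδ : δ = 1 / (2 ^ (d + 5) * A)) (N : ℕ) :
    ∫⁻ y in dCube d I, ENNReal.ofReal (w y) * ENNReal.ofReal (min (w y) N ^ δ)
      ≤ 2 * volume (dCube d I) := by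
  have hδ0 : 0 < δ := by rw [hδ]; positivity
  set m : (Fin d → ℝ) → ℝ := fun y => min (w y) N with hm
  have hmm : Measurable m := hw.min measurable_const
  have hm0 : ∀ y, 0 ≤ m y := fun y => le_min (hw0 y) (Nat.cast_nonneg N)
  set μ := (volume : Measure (Fin d → ℝ)).restrict (dCube d I) with hμ
  have hωm : Measurable fun y => ENNReal.ofReal (w y) := hw.ennreal_ofReal
  set ν := μ.withDensity fun y => ENNReal.ofReal (w y) with hν
  have hνu : ν Set.univ = volume (dCube d I) := by
    rw [hν, withDensity_apply _ MeasurableSet.univ, Measure.restrict_univ, hμ, hI]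
  have hL : ∫⁻ y in dCube d I, ENNReal.ofReal (w y) * ENNReal.ofReal (m y ^ δ)
      = ∫⁻ y, ENNReal.ofReal (m y ^ δ) ∂ν := by
    rw [hν, lintegral_withDensity_eq_lintegral_mul _ hωm (by fun_prop)]
    rfl
  rw [hL]
  set L := ∫⁻ y, ENNReal.ofReal (m y ^ δ) ∂ν with hLdef
  have hLfin : L ≠ ⊤ := by
    have : L ≤ ∫⁻ y, ENNReal.ofReal ((N : ℝ) ^ δ) ∂ν := by
      refine lintegral_mono fun y => ENNReal.ofReal_le_ofReal ?_
      exact Real.rpow_le_rpow (hm0 y) (min_le_right _ _) hδ0.le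
    refine ne_top_of_le_ne_top ?_ this
    rw [lintegral_const, hνu]
    exact ENNReal.mul_ne_top ENNReal.ofReal_ne_top (volume_dCube_ne_top I)
  -- level sets
  have hlev : ∀ t ∈ Set.Ioi (1 : ℝ), ν {a | t < m a} * ENNReal.ofReal (t ^ (δ - 1)) ≤
      2 ^ (d + 1) * (μ {a | t < 2 * A * m a} * ENNReal.ofReal (t ^ (1 + δ - 1))) := by
    intro t ht
    have ht : 1 < t := ht
    have hms : MeasurableSet {a | t < m a} := measurableSet_lt measurable_const hmm
    have hms' : MeasurableSet {a | t < 2 * A * m a} :=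
      measurableSet_lt measurable_const (hmm.const_mul _)
    have e1 : ν {a | t < m a} ≤ 2 ^ (d + 1) * ENNReal.ofReal t * μ {a | t < 2 * A * m a} := by
      by_cases hN : t < N
      · rw [hν, withDensity_apply _ hms, hμ, Measure.restrict_restrict hms,
          Measure.restrict_apply hms']
        have s1 : {a | t < m a} = {a | t < w a} := by
          ext a; simp [hm, hN]
        have s2 : {a | t < 2 * A * m a} = {a | t < 2 * A * w a} := by
          ext a
          simp only [hm, Set.mem_ofPred_eq]
          rw [mul_min_of_nonneg _ _ (by positivity), lt_min_iff]
          refine and_iff_left ?_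
          nlinarith
        rw [s1, s2]
        exact cz_level w hw hw0 I hI (2 * A) hmed t ht.le
      · have : {a | t < m a} = ∅ := by
          ext a
          simp [hm, hN]
        rw [this]; simp
    have e2 : ENNReal.ofReal t * ENNReal.ofReal (t ^ (δ - 1)) =
        ENNReal.ofReal (t ^ (1 + δ - 1)) := by
      rw [← ENNReal.ofReal_mul (by linarith), Real.rpow_sub_one (by linarith)]
      congr 1
      rw [show 1 + δ - 1 = δ by ring]
      field_simp
    calc _ ≤ 2 ^ (d + 1) * ENNReal.ofReal t * μ {a | t < 2 * A * m a} *
          ENNReal.ofReal (t ^ (δ - 1)) := by gcongr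
      _ = 2 ^ (d + 1) * (μ {a | t < 2 * A * m a} *
          (ENNReal.ofReal t * ENNReal.ofReal (t ^ (δ - 1)))) := by ring
      _ = _ := by rw [e2]
  have hlow : ENNReal.ofReal δ * ∫⁻ t in Set.Ioc (0 : ℝ) 1,
      ν {a | t < m a} * ENNReal.ofReal (t ^ (δ - 1)) ≤ volume (dCube d I) := by
    have e1 : ∫⁻ t in Set.Ioc (0 : ℝ) 1, ENNReal.ofReal (t ^ (δ - 1)) = ENNReal.ofReal (1 / δ) := by
      have hi : IntervalIntegrable (fun t : ℝ => t ^ (δ - 1)) volume 0 1 :=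
        intervalIntegral.intervalIntegrable_rpow' (by linarith)
      rw [← ofReal_integral_eq_lintegral_ofReal]
      · rw [← intervalIntegral.integral_of_le zero_le_one, integral_rpow (Or.inl (by linarith))]
        simp [Real.zero_rpow hδ0.ne']
      · exact (intervalIntegrable_iff_integrableOn_Ioc_of_le zero_le_one).1 hi
      · filter_upwards [ae_restrict_mem measurableSet_Ioc] with t ht
        exact Real.rpow_nonneg ht.1.le _
    calc _ ≤ ENNReal.ofReal δ * ∫⁻ t in Set.Ioc (0 : ℝ) 1,
          volume (dCube d I) * ENNReal.ofReal (t ^ (δ - 1)) := by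
          gcongr 1
          refine lintegral_mono fun t => ?_
          gcongr 1
          rw [← hνu]
          exact measure_mono (Set.subset_univ _)
      _ = _ := by
          rw [lintegral_const_mul' _ _ (volume_dCube_ne_top I), e1, mul_left_comm,
            ← ENNReal.ofReal_mul hδ0.le, mul_one_div_cancel hδ0.ne']
          simp
  have hhigh : ENNReal.ofReal δ * ∫⁻ t in Set.Ioi (1 : ℝ),
      ν {a | t < m a} * ENNReal.ofReal (t ^ (δ - 1)) ≤ ENNReal.ofReal (1 / 2) * L := by
    have e0 := lintegral_rpow_eq_lintegral_meas_lt_mul μ (f := fun a => 2 * A * m a)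
      (Filter.Eventually.of_forall fun x => mul_nonneg (by positivity) (hm0 x))
      (hmm.const_mul (2 * A)).aemeasurable (p := 1 + δ) (by linarith)
    have e1 : ∫⁻ t in Set.Ioi (0 : ℝ),
        μ {a | t < 2 * A * m a} * ENNReal.ofReal (t ^ (1 + δ - 1)) ≤
        ∫⁻ a, ENNReal.ofReal ((2 * A * m a) ^ (1 + δ)) ∂μ := by
      rw [e0]
      refine le_mul_of_one_le_left' ?_
      simp [hδ0.le]
    have e2 : ∫⁻ a, ENNReal.ofReal ((2 * A * m a) ^ (1 + δ)) ∂μ ≤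
        ENNReal.ofReal ((2 * A) ^ (1 + δ)) * L := by
      rw [← hL, ← lintegral_const_mul _ (by fun_prop)]
      refine lintegral_mono fun a => ?_
      rw [← ENNReal.ofReal_mul (hw0 a), ← ENNReal.ofReal_mul (by positivity)]
      refine ENNReal.ofReal_le_ofReal ?_
      rw [Real.mul_rpow (by positivity) (hm0 a)]
      gcongr
      rcases (hm0 a).eq_or_lt with h | h
      · rw [← h, Real.zero_rpow (by linarith)]
        exact mul_nonneg (hw0 a) (Real.rpow_nonneg le_rfl _)
      · rw [Real.rpow_add h, Real.rpow_one]
        gcongr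
        exact min_le_left _ _
    calc _ ≤ ENNReal.ofReal δ * ∫⁻ t in Set.Ioi (1 : ℝ),
          2 ^ (d + 1) * (μ {a | t < 2 * A * m a} * ENNReal.ofReal (t ^ (1 + δ - 1))) := by
          gcongr 1
          exact setLIntegral_mono' measurableSet_Ioi hlev
      _ = ENNReal.ofReal δ * (2 ^ (d + 1) * ∫⁻ t in Set.Ioi (1 : ℝ),
          (μ {a | t < 2 * A * m a} * ENNReal.ofReal (t ^ (1 + δ - 1)))) := by
          rw [lintegral_const_mul' _ _ (by simp)]
      _ ≤ ENNReal.ofReal δ * (2 ^ (d + 1) * ∫⁻ t in Set.Ioi (0 : ℝ),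
          (μ {a | t < 2 * A * m a} * ENNReal.ofReal (t ^ (1 + δ - 1)))) := by
          gcongr 2
          exact lintegral_mono_set (Set.Ioi_subset_Ioi zero_le_one)
      _ ≤ ENNReal.ofReal δ * (2 ^ (d + 1) * (ENNReal.ofReal ((2 * A) ^ (1 + δ)) * L)) := by
          gcongr 2
          exact e1.trans e2
      _ = ENNReal.ofReal (δ * 2 ^ (d + 1) * (2 * A) ^ (1 + δ)) * L := by
          rw [ENNReal.ofReal_mul (by positivity), ENNReal.ofReal_mul (by positivity),
            ENNReal.ofReal_pow (by norm_num)]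
          simp only [ENNReal.ofReal_ofNat]
          ring
      _ ≤ _ := by
          gcongr
          exact rh_const A hA δ hδ
  have hmain : L ≤ volume (dCube d I) + ENNReal.ofReal (1 / 2) * L := by
    have h0 := lintegral_rpow_eq_lintegral_meas_lt_mul ν (f := m)
      (Filter.Eventually.of_forall hm0) hmm.aemeasurable hδ0
    have hs : Set.Ioi (0 : ℝ) = Set.Ioc 0 1 ∪ Set.Ioi 1 :=
      (Set.Ioc_union_Ioi_eq_Ioi zero_le_one).symm
    rw [← hLdef, hs, lintegral_union measurableSet_Ioi
      (Set.Ioc_disjoint_Ioi le_rfl), mul_add] at h0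
    exact h0.le.trans (add_le_add hlow hhigh)
  have hV := volume_dCube_ne_top I
  have hLr : L.toReal ≤ (volume (dCube d I)).toReal + 1 / 2 * L.toReal := by
    have := ENNReal.toReal_mono (ENNReal.add_ne_top.2
      ⟨hV, ENNReal.mul_ne_top ENNReal.ofReal_ne_top hLfin⟩) hmain
    rw [ENNReal.toReal_add hV (ENNReal.mul_ne_top ENNReal.ofReal_ne_top hLfin),
      ENNReal.toReal_mul, ENNReal.toReal_ofReal (by norm_num)] at this
    exact this
  rw [← ENNReal.toReal_le_toReal hLfin (ENNReal.mul_ne_top (by simp) hV), ENNReal.toReal_mul]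
  simp only [ENNReal.toReal_ofNat]
  linarith

theorem reverse_holder {d : ℕ} (w : (Fin d → ℝ) → ℝ) (hw : Measurable w)
    (hw0 : ∀ x, 0 ≤ w x) (I : ℤ × (Fin d → ℤ))
    (hI : ∫⁻ y in dCube d I, ENNReal.ofReal (w y) = volume (dCube d I)) (A : ℝ) (hA : 1 ≤ A)
    (hmed : ∀ J : ℤ × (Fin d → ℤ), volume (dCube d J) ≤ 2 * volume
      ({y | ∫⁻ z in dCube d J, ENNReal.ofReal (w z) ≤
        ENNReal.ofReal (2 * A * w y) * volume (dCube d J)} ∩ dCube d J))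
    (δ : ℝ) (hδ : δ = 1 / (2 ^ (d + 5) * A)) :
    ∫⁻ y in dCube d I, ENNReal.ofReal (w y) ^ (1 + δ) ≤ 2 * volume (dCube d I) := by
  have hδ0 : 0 < δ := by rw [hδ]; positivity
  have key : ∀ y, ENNReal.ofReal (w y) ^ (1 + δ) ≤
      ⨆ N : ℕ, ENNReal.ofReal (w y) * ENNReal.ofReal (min (w y) N ^ δ) := by
    intro y
    obtain ⟨N, hN⟩ := exists_nat_ge (w y)
    refine le_iSup_of_le N ?_
    rw [min_eq_left hN, ← ENNReal.ofReal_mul (hw0 y),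
      ENNReal.ofReal_rpow_of_nonneg (hw0 y) (by linarith)]
    refine ENNReal.ofReal_le_ofReal ?_
    rw [Real.rpow_add_of_nonneg (hw0 y) zero_le_one hδ0.le, Real.rpow_one]
  refine (lintegral_mono key).trans ?_
  rw [lintegral_iSup (fun N => by fun_prop)]
  · exact iSup_le fun N => reverse_holder_trunc w hw hw0 I hI A hA hmed δ hδ N
  · intro a b hab y
    have h0 : (0 : ℝ) ≤ min (w y) a := le_min (hw0 y) (Nat.cast_nonneg a)
    have h1 : (a : ℝ) ≤ b := by exact_mod_cast hab
    show ENNReal.ofReal (w y) * ENNReal.ofReal (min (w y) a ^ δ) ≤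
      ENNReal.ofReal (w y) * ENNReal.ofReal (min (w y) b ^ δ)
    gcongr

/-- Version for a.e.-measurable weights. -/
theorem reverse_holder_ae {d : ℕ} (w : (Fin d → ℝ) → ℝ) (hw : AEMeasurable w volume)
    (hw0 : ∀ x, 0 ≤ w x) (I : ℤ × (Fin d → ℤ))
    (hI : ∫⁻ y in dCube d I, ENNReal.ofReal (w y) = volume (dCube d I)) (A : ℝ) (hA : 1 ≤ A)
    (hmed : ∀ J : ℤ × (Fin d → ℤ), volume (dCube d J) ≤ 2 * volume
      ({y | ∫⁻ z in dCube d J, ENNReal.ofReal (w z) ≤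
        ENNReal.ofReal (2 * A * w y) * volume (dCube d J)} ∩ dCube d J))
    (δ : ℝ) (hδ : δ = 1 / (2 ^ (d + 5) * A)) :
    ∫⁻ y in dCube d I, ENNReal.ofReal (w y) ^ (1 + δ) ≤ 2 * volume (dCube d I) := by
  set v : (Fin d → ℝ) → ℝ := fun y => max (hw.mk w y) 0 with hv
  have hae : w =ᵐ[volume] v := by
    filter_upwards [hw.ae_eq_mk] with y hy
    simp only [hv]
    rw [← hy, max_eq_left (hw0 y)]
  have hint : ∀ J : ℤ × (Fin d → ℤ), ∫⁻ y in dCube d J, ENNReal.ofReal (w y) =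
      ∫⁻ y in dCube d J, ENNReal.ofReal (v y) := fun J =>
    lintegral_congr_ae (ae_restrict_of_ae (hae.mono fun y hy => by
      show ENNReal.ofReal (w y) = _
      rw [hy]))
  have h1 : ∫⁻ y in dCube d I, ENNReal.ofReal (w y) ^ (1 + δ) =
      ∫⁻ y in dCube d I, ENNReal.ofReal (v y) ^ (1 + δ) :=
    lintegral_congr_ae (ae_restrict_of_ae (hae.mono fun y hy => by
      show ENNReal.ofReal (w y) ^ (1 + δ) = _
      rw [hy]))
  rw [h1]
  refine reverse_holder v (hw.measurable_mk.max measurable_const) (fun x => le_max_right _ _) I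
    (by rw [← hint, hI]) A hA (fun J => ?_) δ hδ
  refine (hmed J).trans (le_of_eq ?_)
  congr 1
  refine measure_congr ?_
  filter_upwards [hae] with y hy
  apply propext
  show (_ ≤ ENNReal.ofReal (2 * A * w y) * _ ∧ _) ↔ (_ ≤ ENNReal.ofReal (2 * A * v y) * _ ∧ _)
  rw [hint J, hy]

/-! ### Matrix part -/

/-- The quadratic form of a matrix. -/
noncomputable def qf {n : ℕ} (M : Matrix (Fin n) (Fin n) ℂ) (v : Fin n → ℂ) : ℝ :=
  (star v ⬝ᵥ M *ᵥ v).re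

theorem vecNorm_nonneg {n : ℕ} (u : Fin n → ℂ) : 0 ≤ vecNorm u := norm_nonneg _

theorem vecNorm_sq {n : ℕ} (u : Fin n → ℂ) : vecNorm u ^ 2 = (star u ⬝ᵥ u).re := by
  unfold vecNorm
  rw [EuclideanSpace.norm_sq_eq]
  simp only [dotProduct, Complex.re_sum, WithLp.equiv_symm_apply, PiLp.toLp_apply, Pi.star_apply]
  refine Finset.sum_congr rfl fun i _ => ?_
  rw [Complex.sq_norm, Complex.normSq_apply]
  simp

theorem norm_dot_le {n : ℕ} (u v : Fin n → ℂ) : ‖star u ⬝ᵥ v‖ ≤ vecNorm u * vecNorm v := by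
  have := norm_inner_le_norm (𝕜 := ℂ) ((WithLp.equiv 2 (Fin n → ℂ)).symm u)
    ((WithLp.equiv 2 (Fin n → ℂ)).symm v)
  rw [EuclideanSpace.inner_eq_star_dotProduct] at this
  rw [dotProduct_comm]
  exact this

theorem vecNorm_mulVec_le {n : ℕ} (M : Matrix (Fin n) (Fin n) ℂ) (v : Fin n → ℂ) :
    vecNorm (M *ᵥ v) ≤ matNorm M * vecNorm v :=
  (Matrix.toEuclideanCLM (𝕜 := ℂ) M).le_opNorm ((WithLp.equiv 2 (Fin n → ℂ)).symm v)

theorem vecNorm_le_sum {n : ℕ} (u : Fin n → ℂ) : vecNorm u ≤ ∑ i, ‖u i‖ := by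
  have h0 : 0 ≤ ∑ i, ‖u i‖ := Finset.sum_nonneg fun i _ => norm_nonneg _
  refine le_of_sq_le_sq ?_ h0
  unfold vecNorm
  rw [EuclideanSpace.norm_sq_eq]
  exact Finset.sum_sq_le_sq_sum_of_nonneg fun i _ => norm_nonneg _

theorem herm_dot {n : ℕ} {P : Matrix (Fin n) (Fin n) ℂ} (hP : P.IsHermitian)
    (u v : Fin n → ℂ) : star u ⬝ᵥ P *ᵥ v = star (P *ᵥ u) ⬝ᵥ v := by
  rw [star_mulVec, hP.eq, dotProduct_mulVec]

theorem qf_sq {n : ℕ} {P M : Matrix (Fin n) (Fin n) ℂ} (hP : P.IsHermitian) (h : P * P = M)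
    (v : Fin n → ℂ) : qf M v = vecNorm (P *ᵥ v) ^ 2 := by
  rw [vecNorm_sq, qf, ← h, ← mulVec_mulVec, herm_dot hP]

theorem qf_cs {n : ℕ} {P M : Matrix (Fin n) (Fin n) ℂ} (hM : M.PosDef) (hP : P.IsHermitian)
    (h : P * P = M) (u v : Fin n → ℂ) :
    (star u ⬝ᵥ v).re ^ 2 ≤ qf M u * qf M⁻¹ v := by
  have hdet : IsUnit M.det := (Matrix.isUnit_iff_isUnit_det M).1 hM.isUnit
  have h1 : M *ᵥ (M⁻¹ *ᵥ v) = v := by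
    rw [mulVec_mulVec, Matrix.mul_nonsing_inv _ hdet, one_mulVec]
  have h2 : qf M⁻¹ v = vecNorm (P *ᵥ (M⁻¹ *ᵥ v)) ^ 2 := by
    rw [← qf_sq hP h, qf, qf, h1, herm_dot hM.isHermitian.inv]
  have h3 : star u ⬝ᵥ v = star (P *ᵥ u) ⬝ᵥ (P *ᵥ (M⁻¹ *ᵥ v)) := by
    rw [← herm_dot hP, mulVec_mulVec _ P P, h, h1]
  rw [qf_sq hP h, h2, ← mul_pow, h3]
  refine sq_le_sq' ?_ ?_
  · have := (abs_le.1 (Complex.abs_re_le_norm (star (P *ᵥ u) ⬝ᵥ (P *ᵥ (M⁻¹ *ᵥ v))))).1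
    linarith [norm_dot_le (P *ᵥ u) (P *ᵥ (M⁻¹ *ᵥ v))]
  · exact (Complex.re_le_norm _).trans (norm_dot_le _ _)

theorem qf_expand {n : ℕ} (M : Matrix (Fin n) (Fin n) ℂ) (v : Fin n → ℂ) :
    qf M v = (∑ i, ∑ j, star (v i) * (M i j * v j)).re := by
  simp only [qf, dotProduct, mulVec, Finset.mul_sum, Pi.star_apply]

theorem qf_integrableOn {d n : ℕ} (F : (Fin d → ℝ) → Matrix (Fin n) (Fin n) ℂ)
    (J : Set (Fin d → ℝ)) (hF : ∀ i j, IntegrableOn (fun x => F x i j) J volume)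
    (v : Fin n → ℂ) :
    IntegrableOn (fun x => ∑ i, ∑ j, star (v i) * (F x i j * v j)) J volume :=
  integrable_finsetSum _ fun i _ => integrable_finsetSum _ fun j _ =>
    ((hF i j).mul_const _).const_mul _

theorem qf_integrableOn' {d n : ℕ} (F : (Fin d → ℝ) → Matrix (Fin n) (Fin n) ℂ)
    (J : Set (Fin d → ℝ)) (hF : ∀ i j, IntegrableOn (fun x => F x i j) J volume)
    (v : Fin n → ℂ) :
    IntegrableOn (fun x => qf (F x) v) J volume := by
  simp_rw [qf_expand]
  exact (qf_integrableOn F J hF v).re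

theorem integral_qf {d n : ℕ} (F : (Fin d → ℝ) → Matrix (Fin n) (Fin n) ℂ)
    (J : ℤ × (Fin d → ℤ)) (hF : ∀ i j, IntegrableOn (fun x => F x i j) (dCube d J) volume)
    (v : Fin n → ℂ) :
    ∫ x in dCube d J, qf (F x) v = (volume (dCube d J)).toReal * qf (mavg (dCube d J) F) v := by
  have hV : (volume (dCube d J)).toReal ≠ 0 :=
    (ENNReal.toReal_pos (volume_dCube_ne_zero J) (volume_dCube_ne_top J)).ne'
  simp_rw [qf_expand]
  have h1 := integral_re (𝕜 := ℂ) (qf_integrableOn F _ hF v)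
  simp only [RCLike.re_eq_complex_re] at h1
  rw [h1, ← Complex.re_ofReal_mul, Finset.mul_sum]
  congr 1
  rw [integral_finsetSum _ fun i _ => integrable_finsetSum _ fun j _ =>
    ((hF i j).mul_const _).const_mul _]
  refine Finset.sum_congr rfl fun i _ => ?_
  rw [integral_finsetSum _ fun j _ => ((hF i j).mul_const _).const_mul _, Finset.mul_sum]
  refine Finset.sum_congr rfl fun j _ => ?_
  rw [integral_const_mul, integral_mul_const]
  simp only [mavg, Matrix.of_apply, Complex.real_smul, Complex.ofReal_inv]
  have hV' : ((volume (dCube d J)).toReal : ℂ) ≠ 0 := by exact_mod_cast hV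
  field_simp

theorem lintegral_qf {d n : ℕ} (F : (Fin d → ℝ) → Matrix (Fin n) (Fin n) ℂ)
    (J : ℤ × (Fin d → ℤ)) (hF : ∀ i j, IntegrableOn (fun x => F x i j) (dCube d J) volume)
    (v : Fin n → ℂ) (h0 : ∀ x, 0 ≤ qf (F x) v) :
    ∫⁻ x in dCube d J, ENNReal.ofReal (qf (F x) v) =
      volume (dCube d J) * ENNReal.ofReal (qf (mavg (dCube d J) F) v) := by
  rw [← ofReal_integral_eq_lintegral_ofReal (qf_integrableOn' F _ hF v)
    (Filter.Eventually.of_forall h0), integral_qf F J hF v,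
    ENNReal.ofReal_mul ENNReal.toReal_nonneg, ENNReal.ofReal_toReal (volume_dCube_ne_top J)]

theorem qf_nonneg {n : ℕ} {M : Matrix (Fin n) (Fin n) ℂ} (hM : M.PosDef) (v : Fin n → ℂ) :
    0 ≤ qf M v := hM.posSemidef.re_dotProduct_nonneg v

theorem qf_inv_nonneg {n : ℕ} {M : Matrix (Fin n) (Fin n) ℂ} (hM : M.PosDef) (v : Fin n → ℂ) :
    0 ≤ qf M⁻¹ v := qf_nonneg hM.inv v

theorem median {d n : ℕ} (W Whalf : (Fin d → ℝ) → Matrix (Fin n) (Fin n) ℂ)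
    (hW : ∀ x, (W x).PosDef) (hWh : ∀ x, (Whalf x).PosDef ∧ Whalf x * Whalf x = W x)
    (J : ℤ × (Fin d → ℤ)) (S T : Matrix (Fin n) (Fin n) ℂ)
    (hS : S.PosDef ∧ S * S = mavg (dCube d J) W)
    (hT : T.PosDef ∧ T * T = mavg (dCube d J) fun y => (W y)⁻¹)
    (hi : ∀ i j, IntegrableOn (fun x => W x i j) (dCube d J) volume)
    (hi' : ∀ i j, IntegrableOn (fun x => (W x)⁻¹ i j) (dCube d J) volume)
    (A : ℝ) (hA : 1 ≤ A) (hST : matNorm (S * T) ^ 2 ≤ A) (v : Fin n → ℂ) :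
    volume (dCube d J) ≤ 2 * volume
      ({y | ∫⁻ z in dCube d J, ENNReal.ofReal (qf (W z)⁻¹ v) ≤
        ENNReal.ofReal (2 * A * qf (W y)⁻¹ v) * volume (dCube d J)} ∩ dCube d J) := by
  have hw0 := fun y => qf_inv_nonneg (hW y) v
  have hV0 := volume_dCube_ne_zero J
  have hVt := volume_dCube_ne_top J
  rw [lintegral_qf _ J hi' v hw0]
  set a := qf (mavg (dCube d J) fun y => (W y)⁻¹) v with ha
  have haT : a = vecNorm (T *ᵥ v) ^ 2 := qf_sq hT.1.isHermitian hT.2 v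
  have ha0 : 0 ≤ a := by rw [haT]; positivity
  set E : Set (Fin d → ℝ) := {y | 2 * A * qf (W y)⁻¹ v < a} ∩ dCube d J with hE
  set G : Set (Fin d → ℝ) := {y | volume (dCube d J) * ENNReal.ofReal a ≤
        ENNReal.ofReal (2 * A * qf (W y)⁻¹ v) * volume (dCube d J)} ∩ dCube d J with hG
  have hcov : dCube d J ⊆ G ∪ E := by
    intro y hy
    by_cases h : 2 * A * qf (W y)⁻¹ v < a
    · exact Or.inr ⟨h, hy⟩
    · refine Or.inl ⟨?_, hy⟩
      show volume (dCube d J) * ENNReal.ofReal a ≤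
        ENNReal.ofReal (2 * A * qf (W y)⁻¹ v) * volume (dCube d J)
      rw [mul_comm]
      gcongr
      exact not_lt.1 h
  have hEle : 2 * volume E ≤ volume (dCube d J) := by
    rcases ha0.eq_or_lt with h | h
    · have : E = ∅ := by
        ext y
        simp only [hE, Set.mem_inter_iff, Set.mem_ofPred_eq, Set.mem_empty_iff_false, iff_false]
        rintro ⟨h1, -⟩
        have := hw0 y
        nlinarith
      rw [this]; simp
    · set u := T *ᵥ (T *ᵥ v) with hu
      have huv : (star u ⬝ᵥ v).re = a := by
        rw [haT, vecNorm_sq, hu, ← herm_dot hT.1.isHermitian]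
      have hSu : vecNorm (S *ᵥ u) ^ 2 ≤ A * a := by
        rw [hu, mulVec_mulVec, haT]
        calc vecNorm ((S * T) *ᵥ (T *ᵥ v)) ^ 2 ≤ (matNorm (S * T) * vecNorm (T *ᵥ v)) ^ 2 := by
              have := vecNorm_mulVec_le (S * T) (T *ᵥ v)
              have h0 := vecNorm_nonneg ((S * T) *ᵥ (T *ᵥ v))
              gcongr
          _ = matNorm (S * T) ^ 2 * vecNorm (T *ᵥ v) ^ 2 := by ring
          _ ≤ _ := by gcongr
      have hq0 := fun y => qf_nonneg (hW y) u
      have hsub : E ⊆ {y | ENNReal.ofReal (2 * A * a) ≤ ENNReal.ofReal (qf (W y) u)} ∩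
          dCube d J := by
        rintro y ⟨hy, hyJ⟩
        refine ⟨ENNReal.ofReal_le_ofReal ?_, hyJ⟩
        have hy : 2 * A * qf (W y)⁻¹ v < a := hy
        have hcs := qf_cs (hW y) (hWh y).1.isHermitian (hWh y).2 u v
        rw [huv] at hcs
        have h1 : a ^ 2 * (2 * A) ≤ qf (W y) u * a := by
          calc a ^ 2 * (2 * A) ≤ (qf (W y) u * qf (W y)⁻¹ v) * (2 * A) := by gcongr
            _ = qf (W y) u * (2 * A * qf (W y)⁻¹ v) := by ring
            _ ≤ _ := by
              have := hq0 y
              gcongr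
        nlinarith
      have hmk : ENNReal.ofReal (2 * A * a) * volume E ≤
          ENNReal.ofReal (A * a) * volume (dCube d J) := by
        have hae : AEMeasurable (fun y => ENNReal.ofReal (qf (W y) u))
            (volume.restrict (dCube d J)) :=
          (qf_integrableOn' W _ hi u).aestronglyMeasurable.aemeasurable.ennreal_ofReal
        have := mul_meas_ge_le_lintegral₀ hae (ENNReal.ofReal (2 * A * a))
        rw [lintegral_qf W J hi u hq0, qf_sq hS.1.isHermitian hS.2] at this
        calc _ ≤ ENNReal.ofReal (2 * A * a) * (volume.restrict (dCube d J))
              {y | ENNReal.ofReal (2 * A * a) ≤ ENNReal.ofReal (qf (W y) u)} := by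
              gcongr 1
              exact (measure_mono hsub).trans (Measure.le_restrict_apply _ _)
          _ ≤ _ := this
          _ ≤ _ := by
              rw [mul_comm]
              gcongr
      have hpos : 0 < A * a := by positivity
      have h2 : ENNReal.ofReal (2 * A * a) = ENNReal.ofReal (A * a) * 2 := by
        rw [mul_assoc, ENNReal.ofReal_mul (by norm_num), mul_comm]; simp
      rw [h2, mul_assoc] at hmk
      exact (ENNReal.mul_le_mul_iff_right (by simpa using hpos) ENNReal.ofReal_ne_top).1 hmk
  have hle : volume (dCube d J) ≤ volume G + volume E :=
    (measure_mono hcov).trans (measure_union_le _ _)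
  have h2 : volume (dCube d J) + volume (dCube d J) ≤ 2 * volume G + volume (dCube d J) := by
    calc volume (dCube d J) + volume (dCube d J) ≤ (volume G + volume E) + (volume G + volume E) :=
          add_le_add hle hle
      _ = 2 * volume G + 2 * volume E := by ring
      _ ≤ _ := by gcongr
  exact (ENNReal.add_le_add_iff_right hVt).1 h2

theorem aemeasurable_of_cubes {d : ℕ} (w : (Fin d → ℝ) → ℝ)
    (h : ∀ J : ℤ × (Fin d → ℤ), IntegrableOn w (dCube d J) volume) : AEMeasurable w volume := by
  have hU : (⋃ J : ℤ × (Fin d → ℤ), dCube d J) = Set.univ :=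
    Set.eq_univ_of_forall fun x => Set.mem_iUnion.2 ⟨idx 0 x, mem_idx 0 x⟩
  rw [← Measure.restrict_univ (μ := (volume : Measure (Fin d → ℝ))), ← hU, aemeasurable_iUnion_iff]
  exact fun J => (h J).aestronglyMeasurable.aemeasurable

theorem qf_normalized {n : ℕ} {R M T : Matrix (Fin n) (Fin n) ℂ} (hR : R.PosDef)
    (hRM : R * R = M⁻¹) (hT : T.PosDef) (hTM : T * T = M) (i : Fin n) :
    qf M (R *ᵥ Pi.single i 1) = 1 := by
  have hdet : IsUnit M.det := by
    rw [← Matrix.isUnit_iff_isUnit_det, ← hTM]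
    exact hT.isUnit.mul hT.isUnit
  have h1 : R * (R * M) = 1 := by
    rw [← mul_assoc, hRM, Matrix.nonsing_inv_mul _ hdet]
  have h2 : R * M * R = 1 := mul_eq_one_comm.1 h1
  have h3 : star (R *ᵥ Pi.single i 1) ⬝ᵥ M *ᵥ (R *ᵥ Pi.single i 1) =
      star (Pi.single i (1 : ℂ) : Fin n → ℂ) ⬝ᵥ (R * M * R) *ᵥ Pi.single i 1 := by
    rw [← herm_dot hR.isHermitian, ← mulVec_mulVec, ← mulVec_mulVec]
  rw [qf, h3, h2, one_mulVec, ← vecNorm_sq]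
  simp [vecNorm]

theorem vecNorm_RP_le {n : ℕ} {R P M : Matrix (Fin n) (Fin n) ℂ} (hR : R.PosDef)
    (hP : P.PosDef) (hPM : P * P = M) (f : Fin n → ℂ) :
    vecENorm (R *ᵥ (P *ᵥ f)) ≤
      ∑ i, ENNReal.ofReal (qf M (R *ᵥ Pi.single i 1)) ^ (1 / 2 : ℝ) * vecENorm f := by
  have h1 : ∀ i, ‖(R *ᵥ (P *ᵥ f)) i‖ ≤ vecNorm (P *ᵥ (R *ᵥ Pi.single i 1)) * vecNorm f := by
    intro i
    have : (R *ᵥ (P *ᵥ f)) i = star (P *ᵥ (R *ᵥ Pi.single i 1)) ⬝ᵥ f := by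
      rw [← herm_dot hP.isHermitian, ← herm_dot hR.isHermitian]
      simp
    rw [this]
    exact norm_dot_le _ _
  have h2 : ∀ i, ENNReal.ofReal (qf M (R *ᵥ Pi.single i 1)) ^ (1 / 2 : ℝ) =
      ENNReal.ofReal (vecNorm (P *ᵥ (R *ᵥ Pi.single i 1))) := by
    intro i
    rw [qf_sq hP.isHermitian hPM, ENNReal.ofReal_rpow_of_nonneg (by positivity) (by norm_num),
      ← Real.sqrt_eq_rpow, Real.sqrt_sq (vecNorm_nonneg _)]
  simp_rw [h2, vecENorm, ← ENNReal.ofReal_mul (vecNorm_nonneg _)]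
  rw [← ENNReal.ofReal_sum_of_nonneg fun i _ => mul_nonneg (vecNorm_nonneg _) (vecNorm_nonneg _)]
  exact ENNReal.ofReal_le_ofReal ((vecNorm_le_sum _).trans (Finset.sum_le_sum fun i _ => h1 i))

theorem measurable_vecNorm {d n : ℕ} (f : (Fin d → ℝ) → Fin n → ℂ)
    (hf : ∀ i, Measurable fun x => f x i) : Measurable fun x => vecNorm (f x) := by
  have : ∀ x, vecNorm (f x) = Real.sqrt (∑ i, ‖f x i‖ ^ 2) := by
    intro x
    rw [vecNorm, EuclideanSpace.norm_eq]
    rfl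
  simp_rw [this]
  exact (Finset.measurable_sum _ fun i _ => (hf i).norm.pow_const 2).sqrt

theorem holder_cube {d : ℕ} (I : ℤ × (Fin d → ℤ)) (ω F : (Fin d → ℝ) → ℝ≥0∞)
    (hω : AEMeasurable ω volume) (hF : AEMeasurable F volume) (δ : ℝ) (hδ : 0 < δ)
    (hRH : ∫⁻ y in dCube d I, ω y ^ (1 + δ) ≤ 2 * volume (dCube d I)) :
    (volume (dCube d I))⁻¹ * ∫⁻ y in dCube d I, ω y ^ (1 / 2 : ℝ) * F y ≤
      2 * ((volume (dCube d I))⁻¹ * ∫⁻ y in dCube d I,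
        F y ^ ((2 + 2 * δ) / (1 + 2 * δ))) ^ ((1 + 2 * δ) / (2 + 2 * δ)) := by
  have hV0 := volume_dCube_ne_zero I
  have hVt := volume_dCube_ne_top I
  set V := volume (dCube d I) with hV
  set q : ℝ := 2 + 2 * δ with hq
  set p : ℝ := (2 + 2 * δ) / (1 + 2 * δ) with hp
  have hp1 : (1 + 2 * δ) / (2 + 2 * δ) = 1 / p := by rw [hp, one_div_div]
  have hqp : q.HolderConjugate p := by
    rw [Real.holderConjugate_iff]
    refine ⟨by rw [hq]; linarith, ?_⟩
    rw [hq, hp, inv_div]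
    field_simp
    ring
  have hq0 : 0 < 1 / q := by rw [hq]; positivity
  have hsum : 1 / q + 1 / p = 1 := by simpa using hqp.inv_add_inv_eq_one
  have hH := ENNReal.lintegral_mul_le_Lp_mul_Lq (volume.restrict (dCube d I)) hqp
    (f := fun y => ω y ^ (1 / 2 : ℝ)) (g := F) (hω.restrict.pow_const _) hF.restrict
  have hpow : ∀ y, (ω y ^ (1 / 2 : ℝ)) ^ q = ω y ^ (1 + δ) := by
    intro y
    rw [← ENNReal.rpow_mul]
    congr 1
    rw [hq]; ring
  simp only [hpow, Pi.mul_apply] at hH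
  rw [hp1]
  have h2 : (2 : ℝ≥0∞) ^ (1 / q) ≤ 2 := by
    calc (2 : ℝ≥0∞) ^ (1 / q) ≤ (2 : ℝ≥0∞) ^ (1 : ℝ) := by
          apply ENNReal.rpow_le_rpow_of_exponent_le (by norm_num)
          rw [hq, div_le_one (by positivity)]
          linarith
      _ = 2 := by simp
  have hp0 : 0 ≤ 1 / p := by rw [← hp1]; positivity
  set X := ∫⁻ y in dCube d I, F y ^ p with hX
  calc V⁻¹ * ∫⁻ y in dCube d I, ω y ^ (1 / 2 : ℝ) * F y
      ≤ V⁻¹ * ((2 * V) ^ (1 / q) * X ^ (1 / p)) := by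
        gcongr
        refine hH.trans ?_
        gcongr
    _ = (V⁻¹ ^ (1 / q) * V⁻¹ ^ (1 / p)) * ((2 * V) ^ (1 / q) * X ^ (1 / p)) := by
        rw [← ENNReal.rpow_add _ _ (ENNReal.inv_ne_zero.2 hVt) (ENNReal.inv_ne_top.2 hV0), hsum,
          ENNReal.rpow_one]
    _ = 2 ^ (1 / q) * (V⁻¹ * V) ^ (1 / q) * (V⁻¹ * X) ^ (1 / p) := by
        rw [ENNReal.mul_rpow_of_nonneg _ _ hq0.le, ENNReal.mul_rpow_of_nonneg _ _ hq0.le,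
          ENNReal.mul_rpow_of_nonneg _ _ hp0]
        ring
    _ ≤ _ := by
        rw [ENNReal.inv_mul_cancel hV0 hVt, ENNReal.one_rpow, mul_one]
        gcongr

/-- Pointwise domination of the auxiliary maximal function for a matrix `A₂` weight `W`
(characteristic at most `Cw`): there are `ε ≈ Cw⁻¹` and a constant `c` (depending only on
`n`, `d`) with `M_W' f(x) ≤ c (M(|f|^{(2+ε)/(1+ε)})(x))^{(1+ε)/(2+ε)}`, and consequently
`‖M_W'‖²_{L²→L²} ≲ Cw`.  Here `Whalf = W^{1/2}`, `Winvhalf = W^{-1/2}`, `Sq I, Tq I` are the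
square roots of `m_I W, m_I(W⁻¹)` and `R I = (m_I(W⁻¹))^{-1/2}`. -/
theorem stmt11 {d n : ℕ} :
    ∃ c : ℝ, 0 < c ∧
      ∀ (W Whalf Winvhalf : (Fin d → ℝ) → Matrix (Fin n) (Fin n) ℂ),
        (∀ x, (W x).PosDef) →
        (∀ x, (Whalf x).PosDef ∧ Whalf x * Whalf x = W x) →
        (∀ x, (Winvhalf x).PosDef ∧ Winvhalf x * Winvhalf x = (W x)⁻¹) →
      ∀ Sq Tq R : ℤ × (Fin d → ℤ) → Matrix (Fin n) (Fin n) ℂ,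
        (∀ I, (Sq I).PosDef ∧ Sq I * Sq I = mavg (dCube d I) W) →
        (∀ I, (Tq I).PosDef ∧ Tq I * Tq I = mavg (dCube d I) fun y => (W y)⁻¹) →
        (∀ I, (R I).PosDef ∧ R I * R I = (mavg (dCube d I) fun y => (W y)⁻¹)⁻¹) →
      (∀ I i j, IntegrableOn (fun x => W x i j) (dCube d I) volume) →
      (∀ I i j, IntegrableOn (fun x => (W x)⁻¹ i j) (dCube d I) volume) →
      ∀ Cw : ℝ, 1 ≤ Cw →
      (∀ I, matNorm (Sq I * Tq I) ^ 2 ≤ Cw) →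
      ∀ f : (Fin d → ℝ) → Fin n → ℂ, (∀ i, Measurable fun x => f x i) →
      ∃ ε : ℝ, 0 < ε ∧ c⁻¹ * Cw⁻¹ ≤ ε ∧ ε ≤ c * Cw⁻¹ ∧
        (∀ x, MWaux R Winvhalf f x
            ≤ ENNReal.ofReal c *
              (dyadicMax (fun y => vecENorm (f y) ^ ((2 + ε) / (1 + ε))) x)
                ^ ((1 + ε) / (2 + ε))) ∧
        (∫⁻ x, (MWaux R Winvhalf f x) ^ (2 : ℕ))
          ≤ ENNReal.ofReal (c * Cw) * ∫⁻ x, vecENorm (f x) ^ (2 : ℕ) := by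
  set K : ℝ := 2 ^ (d + 5) with hK
  have hK1 : 32 ≤ K := by
    rw [hK, pow_add]
    have : (1 : ℝ) ≤ 2 ^ d := one_le_pow₀ (by norm_num)
    nlinarith
  set c : ℝ := K + 2 * n + 32 * (n : ℝ) ^ 2 * (1 + K) with hc
  have hn0 : (0 : ℝ) ≤ n := Nat.cast_nonneg n
  have hq0 : 0 ≤ 32 * (n : ℝ) ^ 2 * (1 + K) := by positivity
  have hcK : K ≤ c := by rw [hc]; linarith
  have hc0 : 0 < c := by linarith
  refine ⟨c, hc0, ?_⟩
  intro W Whalf Winvhalf hW hWh hWi Sq Tq R hS hT hR hi hi' Cw hCw hA2 f hf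
  have hCw0 : 0 < Cw := by linarith
  set δ : ℝ := 1 / (2 ^ (d + 5) * Cw) with hδ
  have hδ0 : 0 < δ := by rw [hδ]; positivity
  have hδK : δ = K⁻¹ * Cw⁻¹ := by rw [hδ, ← hK, one_div, mul_inv]
  have hvm := measurable_vecNorm f hf
  have hvem : Measurable fun y => vecENorm (f y) := hvm.ennreal_ofReal
  have hpt : ∀ x, MWaux R Winvhalf f x ≤ ENNReal.ofReal (2 * n) *
      (dyadicMax (fun y => vecENorm (f y) ^ ((2 + 2 * δ) / (1 + 2 * δ))) x)
        ^ ((1 + 2 * δ) / (2 + 2 * δ)) := by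
    intro x
    unfold MWaux
    refine iSup₂_le fun I hI => ?_
    set v : Fin n → Fin n → ℂ := fun i => R I *ᵥ Pi.single i 1 with hv
    have hwi : ∀ i J, IntegrableOn (fun y => qf (W y)⁻¹ (v i)) (dCube d J) volume := fun i J =>
      qf_integrableOn' (fun y => (W y)⁻¹) _ (hi' J) _
    have hwm : ∀ i, AEMeasurable (fun y => qf (W y)⁻¹ (v i)) volume := fun i =>
      aemeasurable_of_cubes _ (hwi i)
    have hRH : ∀ i, ∫⁻ y in dCube d I, ENNReal.ofReal (qf (W y)⁻¹ (v i)) ^ (1 + δ) ≤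
        2 * volume (dCube d I) := by
      intro i
      refine reverse_holder_ae _ (hwm i) (fun y => qf_inv_nonneg (hW y) _) I ?_ Cw hCw
        (fun J => median W Whalf hW hWh J (Sq J) (Tq J) (hS J) (hT J) (hi J) (hi' J) Cw hCw
          (hA2 J) (v i)) δ hδ
      rw [lintegral_qf (fun y => (W y)⁻¹) I (hi' I) (v i) fun y => qf_inv_nonneg (hW y) _,
        qf_normalized (hR I).1 (hR I).2 (hT I).1 (hT I).2 i]
      simp
    set D := dyadicMax (fun y => vecENorm (f y) ^ ((2 + 2 * δ) / (1 + 2 * δ))) x with hD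
    have hcube : ∀ i, (volume (dCube d I))⁻¹ * ∫⁻ y in dCube d I,
        ENNReal.ofReal (qf (W y)⁻¹ (v i)) ^ (1 / 2 : ℝ) * vecENorm (f y) ≤
        2 * D ^ ((1 + 2 * δ) / (2 + 2 * δ)) := by
      intro i
      refine (holder_cube I (fun y => ENNReal.ofReal (qf (W y)⁻¹ (v i)))
        (fun y => vecENorm (f y)) (hwm i).ennreal_ofReal hvem.aemeasurable δ hδ0 (hRH i)).trans ?_
      gcongr
      exact le_iSup₂ (f := fun (I : ℤ × (Fin d → ℤ)) (_ : x ∈ dCube d I) =>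
        (volume (dCube d I))⁻¹ * ∫⁻ y in dCube d I,
          vecENorm (f y) ^ ((2 + 2 * δ) / (1 + 2 * δ))) I hI
    calc _ ≤ (volume (dCube d I))⁻¹ * ∫⁻ y in dCube d I, ∑ i,
          ENNReal.ofReal (qf (W y)⁻¹ (v i)) ^ (1 / 2 : ℝ) * vecENorm (f y) := by
          gcongr with y
          exact vecNorm_RP_le (hR I).1 (hWi y).1 (hWi y).2 (f y)
      _ = ∑ i, (volume (dCube d I))⁻¹ * ∫⁻ y in dCube d I,
          ENNReal.ofReal (qf (W y)⁻¹ (v i)) ^ (1 / 2 : ℝ) * vecENorm (f y) := by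
          rw [lintegral_finsetSum', Finset.mul_sum]
          intro i _
          exact ((hwm i).ennreal_ofReal.restrict.pow_const _).mul hvem.aemeasurable
      _ ≤ ∑ i : Fin n, 2 * D ^ ((1 + 2 * δ) / (2 + 2 * δ)) := Finset.sum_le_sum fun i _ => hcube i
      _ = _ := by
          rw [Finset.sum_const, Finset.card_univ, Fintype.card_fin, nsmul_eq_mul,
            ENNReal.ofReal_mul (by norm_num)]
          simp only [ENNReal.ofReal_ofNat, ENNReal.ofReal_natCast]
          ring
  refine ⟨2 * δ, by positivity, ?_, ?_, ?_, ?_⟩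
  · rw [hδK, ← mul_assoc]
    gcongr
    have h1 : c⁻¹ ≤ K⁻¹ := inv_anti₀ (by linarith) hcK
    have h2 : 0 < K⁻¹ := by positivity
    linarith
  · rw [hδK, ← mul_assoc]
    gcongr
    have h1 : K⁻¹ ≤ 1 := inv_le_one_of_one_le₀ (by linarith)
    linarith
  · intro x
    refine (hpt x).trans ?_
    gcongr
    rw [hc]; linarith
  · set p : ℝ := (2 + 2 * δ) / (1 + 2 * δ) with hp
    set r : ℝ := 2 * ((1 + 2 * δ) / (2 + 2 * δ)) with hr
    have hr1 : r - 1 = δ / (1 + δ) := by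
      rw [hr]; field_simp; ring
    have hr1' : 1 < r := by
      have : 0 < δ / (1 + δ) := by positivity
      linarith
    have hr2 : r ≤ 2 := by
      have : δ / (1 + δ) ≤ 1 := by rw [div_le_one (by positivity)]; linarith
      linarith
    have hpr : p * r = 2 := by
      rw [hp, hr]; field_simp
    have hp0 : 0 ≤ p := by rw [hp]; positivity
    have hst := strong_type (fun y => vecNorm (f y) ^ p) (hvm.pow_const p)
      (fun y => Real.rpow_nonneg (vecNorm_nonneg _) _) r hr1' hr2
    have hg : ∀ y, ENNReal.ofReal (vecNorm (f y) ^ p) = vecENorm (f y) ^ p := fun y =>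
      (ENNReal.ofReal_rpow_of_nonneg (vecNorm_nonneg _) hp0).symm
    simp only [hg] at hst
    have hg2 : ∀ y, (vecENorm (f y) ^ p) ^ r = vecENorm (f y) ^ (2 : ℕ) := by
      intro y
      rw [← ENNReal.rpow_mul, hpr, ← ENNReal.rpow_natCast]
      norm_num
    simp only [hg2] at hst
    have hsq : ∀ x, MWaux R Winvhalf f x ^ (2 : ℕ) ≤ ENNReal.ofReal (4 * (n : ℝ) ^ 2) *
        dyadicMax (fun y => vecENorm (f y) ^ p) x ^ r := by
      intro x
      calc MWaux R Winvhalf f x ^ (2 : ℕ) ≤ (ENNReal.ofReal (2 * n) *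
            dyadicMax (fun y => vecENorm (f y) ^ p) x ^ ((1 + 2 * δ) / (2 + 2 * δ))) ^ (2 : ℕ) :=
            pow_le_pow_left' (hpt x) 2
        _ = _ := by
            rw [mul_pow, ← ENNReal.ofReal_pow (by positivity), ← ENNReal.rpow_natCast,
              ← ENNReal.rpow_mul]
            congr 2
            · ring
            · rw [hr]; push_cast; ring
    calc _ ≤ ∫⁻ x, ENNReal.ofReal (4 * (n : ℝ) ^ 2) *
          dyadicMax (fun y => vecENorm (f y) ^ p) x ^ r := lintegral_mono hsq
      _ = ENNReal.ofReal (4 * (n : ℝ) ^ 2) * ∫⁻ x,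
          dyadicMax (fun y => vecENorm (f y) ^ p) x ^ r :=
          lintegral_const_mul' _ _ ENNReal.ofReal_ne_top
      _ ≤ ENNReal.ofReal (4 * (n : ℝ) ^ 2) * (ENNReal.ofReal (8 / (r - 1)) *
          ∫⁻ x, vecENorm (f x) ^ (2 : ℕ)) := by gcongr
      _ = ENNReal.ofReal (4 * (n : ℝ) ^ 2 * (8 / (r - 1))) * ∫⁻ x, vecENorm (f x) ^ (2 : ℕ) := by
          rw [← mul_assoc, ← ENNReal.ofReal_mul (by positivity)]
      _ ≤ _ := by
          refine mul_le_mul_left (ENNReal.ofReal_le_ofReal ?_) _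
          have h8 : 8 / (r - 1) = 8 * (1 + K * Cw) := by
            rw [hr1, hδK]
            have : 0 < K := by linarith
            field_simp
            ring
          rw [h8]
          calc 4 * (n : ℝ) ^ 2 * (8 * (1 + K * Cw)) ≤ 4 * (n : ℝ) ^ 2 * (8 * (Cw + K * Cw)) := by
                gcongr
            _ = 32 * (n : ℝ) ^ 2 * (1 + K) * Cw := by ring
            _ ≤ c * Cw := by
                gcongr
                rw [hc]; linarith
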